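/- In the waterline assignment, let S = R(≺_{(0,0)}, (0,0), (4,3)) and S' = R(≺_{(3,−3)}, (3,−3), (6,3)). Then (0,0), (3,0), (4,3) ∈ S and (3,−3), (3,0), (6,1) ∈ S', so that dist(S,S',·) takes the values −3, 0, and −2 at coordinate sums 0, 3, and 7 respectively; hence S and S' are not smooth, and consequently the CDS generated by the waterline assignment is not a smooth grid geometry. -/

import Mathlib

open scoped Classical

/-- Points of the digital plane. -/
abbrev Pt : Type := ℤ × ℤ

/-- `q` lies in the closed first quadrant of `p`. -/
def Quad1 (p q : Pt) : Prop := p.1 ≤ q.1 ∧ p.2 ≤ q.2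

/-- The number of elements `y` of the finite set `J` with `y ≺ x` or `y = x`. -/
noncomputable def rankLE (lt : ℤ → ℤ → Prop) (J : Finset ℤ) (x : ℤ) : ℤ :=
  ((J.filter fun y => lt y x ∨ y = x).card : ℤ)

/-- `x` is among the `k` smallest elements of `J` with respect to the linear order `lt`. -/
def AmongSmallest (lt : ℤ → ℤ → Prop) (J : Finset ℤ) (k x : ℤ) : Prop :=
  x ∈ J ∧ rankLE lt J x ≤ k

/-- The interval `I(p,q) = [p.x+p.y, q.x+q.y-1]`. -/
noncomputable def Ival (p q : Pt) : Finset ℤ := Finset.Icc (p.1 + p.2) (q.1 + q.2 - 1)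

/-- Membership in `H(lt,p,q)`: the `q.x - p.x` smallest elements of `I(p,q)` w.r.t. `lt`. -/
def Hmem (lt : ℤ → ℤ → Prop) (p q : Pt) (a : ℤ) : Prop :=
  AmongSmallest lt (Ival p q) (q.1 - p.1) a

/-- The digital segment `R(lt,p,q)` for `q ∈ Q¹_p`, generated by the linear order `lt`. -/
noncomputable def seg (lt : ℤ → ℤ → Prop) (p q : Pt) : Set Pt :=
  {r : Pt | p.1 ≤ r.1 ∧ r.1 ≤ q.1 ∧ p.2 ≤ r.2 ∧ r.2 ≤ q.2 ∧
    p.1 + p.2 ≤ r.1 + r.2 ∧ r.1 + r.2 ≤ q.1 + q.2 ∧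
    r.1 - p.1 =
      (((Finset.Icc (p.1 + p.2) (r.1 + r.2 - 1)).filter fun a => Hmem lt p q a).card : ℤ)}

/-- `(t₁,t₂)` is a witness to the violation of (S3) for the pair of sets `(S,S')`. -/
def Witness (S S' : Set Pt) (t₁ t₂ : Pt) : Prop :=
  t₁ ∈ S ∧ t₁ ∈ S' ∧ t₂ ∈ S ∧ t₂ ∈ S' ∧
  t₁.1 + t₁.2 < t₂.1 + t₂.2 ∧
  ((t₁.1 + 1, t₁.2) : Pt) ∈ S ∧ ((t₁.1, t₁.2 + 1) : Pt) ∈ S' ∧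
  ((t₂.1, t₂.2 - 1) : Pt) ∈ S ∧ ((t₂.1 - 1, t₂.2) : Pt) ∈ S'

/-- `a ≠ b` form a bad pair for `(lt,p)` and `(lt',p')`, where `p.x ≤ p'.x`. -/
def BadPair (lt lt' : ℤ → ℤ → Prop) (p p' : Pt) (a b : ℤ) : Prop :=
  a ≠ b ∧ ∃ C ℓ : ℤ, p.1 + p.2 ≤ C ∧ p'.1 + p'.2 ≤ C ∧
    a ∈ Finset.Icc (p.1 + p.2) (C - 1) ∧ b ∈ Finset.Icc (p.1 + p.2) (C - 1) ∧
    a ∈ Finset.Icc (p'.1 + p'.2) (C - 1) ∧ b ∈ Finset.Icc (p'.1 + p'.2) (C - 1) ∧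
    AmongSmallest lt (Finset.Icc (p.1 + p.2) (C - 1)) ℓ a ∧
    ¬ AmongSmallest lt (Finset.Icc (p.1 + p.2) (C - 1)) ℓ b ∧
    AmongSmallest lt' (Finset.Icc (p'.1 + p'.2) (C - 1)) (ℓ - (p'.1 - p.1)) b ∧
    ¬ AmongSmallest lt' (Finset.Icc (p'.1 + p'.2) (C - 1)) (ℓ - (p'.1 - p.1)) a

/-- Bad pair for arbitrary `p, p'`: for `p.x > p'.x` the roles of `p` and `p'` are exchanged. -/
def BadPairSym (lt lt' : ℤ → ℤ → Prop) (p p' : Pt) (a b : ℤ) : Prop :=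
  (p.1 ≤ p'.1 ∧ BadPair lt lt' p p' a b) ∨ (p'.1 ≤ p.1 ∧ BadPair lt' lt p' p a b)

/-- Adjacency in the unit grid graph on `ℤ²`. -/
def GridAdj (u v : Pt) : Prop := |u.1 - v.1| + |u.2 - v.2| = 1

/-- `S` is the vertex set of a path from `p` to `q` in the unit grid graph. -/
def IsGridPath (S : Set Pt) (p q : Pt) : Prop :=
  ∃ (n : ℕ) (f : ℕ → Pt), f 0 = p ∧ f n = q ∧
    (∀ i, i < n → GridAdj (f i) (f (i + 1))) ∧
    (∀ i j, i ≤ n → j ≤ n → f i = f j → i = j) ∧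
    S = {r : Pt | ∃ i, i ≤ n ∧ f i = r}

/-- The pair `p, q` has nonnegative slope. -/
def NonnegPair (p q : Pt) : Prop := (p.1 ≤ q.1 ∧ p.2 ≤ q.2) ∨ (q.1 ≤ p.1 ∧ q.2 ≤ p.2)

/-- A nonnegative-slope digital segment system `R` is a CDS: properties (S1)-(S5). -/
def IsCDS (R : Pt → Pt → Set Pt) : Prop :=
  ∀ p q : Pt, NonnegPair p q →
    IsGridPath (R p q) p q ∧
    R p q = R q p ∧
    (∀ r s : Pt, r ∈ R p q → s ∈ R p q → NonnegPair r s → R r s ⊆ R p q) ∧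
    (∃ r : Pt, r ∉ R p q ∧ NonnegPair p r ∧ R p q ⊆ R p r) ∧
    (p.1 = q.1 → ∀ r ∈ R p q, r.1 = p.1) ∧
    (p.2 = q.2 → ∀ r ∈ R p q, r.2 = p.2)

/-- The nonnegative-slope digital segment system generated by an assignment of
linear orders to the points of `ℤ²`. -/
noncomputable def genR (ord : Pt → ℤ → ℤ → Prop) (p q : Pt) : Set Pt :=
  if p.1 ≤ q.1 ∧ p.2 ≤ q.2 then seg (ord p) p q else seg (ord q) q p

/-- The orders `lt` at `p` and `lt'` at `p'` are in agreement. -/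
def Agree (p p' : Pt) (lt lt' : ℤ → ℤ → Prop) : Prop :=
  ∀ a b : ℤ, max p.1 p'.1 + max p.2 p'.2 ≤ a → max p.1 p'.1 + max p.2 p'.2 ≤ b →
    (lt a b ↔ lt' a b)

/-- Two digital segments are smooth: the antidiagonal distance function is
monotonically nondecreasing or nonincreasing on its domain. -/
def SmoothPair (S S' : Set Pt) : Prop :=
  (∀ r₁ s₁ r₂ s₂ : Pt, r₁ ∈ S → s₁ ∈ S' → r₂ ∈ S → s₂ ∈ S' →
      r₁.1 + r₁.2 = s₁.1 + s₁.2 → r₂.1 + r₂.2 = s₂.1 + s₂.2 →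
      r₁.1 + r₁.2 ≤ r₂.1 + r₂.2 → r₁.1 - s₁.1 ≤ r₂.1 - s₂.1) ∨
  (∀ r₁ s₁ r₂ s₂ : Pt, r₁ ∈ S → s₁ ∈ S' → r₂ ∈ S → s₂ ∈ S' →
      r₁.1 + r₁.2 = s₁.1 + s₁.2 → r₂.1 + r₂.2 = s₂.1 + s₂.2 →
      r₁.1 + r₁.2 ≤ r₂.1 + r₂.2 → r₂.1 - s₂.1 ≤ r₁.1 - s₁.1)

/-- The waterline assignment of linear orders. -/
def waterOrd (p : Pt) : ℤ → ℤ → Prop := fun a b =>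
  if 0 ≤ p.2 then a < b
  else (p.1 ≤ a ∧ p.1 ≤ b ∧ a < b) ∨ (p.1 ≤ a ∧ b < p.1) ∨ (a < p.1 ∧ b < p.1 ∧ b < a)

/-- `p₃` has a conflicting priority with respect to `(lt,p)` and `(lt',p')`. -/
def ConflictPriority (lt lt' : ℤ → ℤ → Prop) (p p' p₃ : Pt) : Prop :=
  ∃ a b : ℤ, a ∈ Ival p p₃ ∧ a ∈ Ival p' p₃ ∧ b ∈ Ival p p₃ ∧ b ∈ Ival p' p₃ ∧
    Hmem lt p p₃ b ∧ ¬ Hmem lt p p₃ a ∧ Hmem lt' p' p₃ a ∧ ¬ Hmem lt' p' p₃ b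

/-!
A waterline segment that ends on or above the `x`-axis climbs vertically until it reaches the axis
(or not at all if it starts above it), then runs horizontally over its full width, and climbs
vertically to its endpoint: the order at `p` puts the coordinate sums of that horizontal run first.
The horizontal runs of `S` and `S'` cover the coordinate sums `0..4` and `3..6`. So the distance
`r.x - s.x` grows while only `S` moves right and shrinks while only `S'` does, and monotonicity
fails in both directions.
-/

theorem amongSmallest_card_iff_mem {lt : ℤ → ℤ → Prop} [Std.Asymm lt] {H J : Finset ℤ}
    (hHJ : H ⊆ J) (hlt : ∀ a ∈ H, ∀ b ∈ J, b ∉ H → lt a b) (x : ℤ) :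
    AmongSmallest lt J H.card x ↔ x ∈ H := by
  unfold AmongSmallest rankLE
  constructor
  · rintro ⟨hxJ, hrank⟩
    by_contra hxH
    have hsub : insert x H ⊆ J.filter fun y => lt y x ∨ y = x := by
      intro y hy
      rcases Finset.mem_insert.1 hy with rfl | hyH
      · exact Finset.mem_filter.2 ⟨hxJ, Or.inr rfl⟩
      · exact Finset.mem_filter.2 ⟨hHJ hyH, Or.inl (hlt y hyH x hxJ hxH)⟩
    have hcard := Finset.card_le_card hsub
    rw [Finset.card_insert_of_notMem hxH] at hcard
    omega
  · intro hxH
    have hsub : (J.filter fun y => lt y x ∨ y = x) ⊆ H := by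
      intro y hy
      obtain ⟨hyJ, hyx | rfl⟩ := Finset.mem_filter.1 hy
      · by_contra hyH
        exact Std.Asymm.asymm _ _ hyx (hlt x hxH y hyJ hyH)
      · exact hxH
    exact ⟨hHJ hxH, Int.ofNat_le.2 (Finset.card_le_card hsub)⟩

/-- The monotone path from `p` to `q` that climbs to height `h`, runs horizontally at that height,
and climbs again. It is such a path only for `p.1 ≤ q.1` and `p.2 ≤ h ≤ q.2`. -/
def stepPath (p q : Pt) (h : ℤ) : Set Pt :=
  {p.1} ×ˢ Set.Icc p.2 h ∪ Set.Icc p.1 q.1 ×ˢ {h} ∪ {q.1} ×ˢ Set.Icc h q.2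

theorem seg_eq_stepPath {lt : ℤ → ℤ → Prop} {p q : Pt} {h : ℤ} (hpq : p.1 ≤ q.1)
    (hp : p.2 ≤ h) (hq : h ≤ q.2)
    (hH : ∀ a, Hmem lt p q a ↔ a ∈ Finset.Ico (p.1 + h) (q.1 + h)) :
    seg lt p q = stepPath p q h := by
  ext r
  have hfilter : ((Finset.Icc (p.1 + p.2) (r.1 + r.2 - 1)).filter fun a => Hmem lt p q a) =
      Finset.Ico (p.1 + h) (min (r.1 + r.2) (q.1 + h)) := by
    ext a
    simp only [Finset.mem_filter, hH, Finset.mem_Icc, Finset.mem_Ico]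
    omega
  simp only [seg, hfilter, Int.card_Ico, Set.mem_ofPred_eq, stepPath, Set.mem_union, Set.mem_prod,
    Set.mem_singleton_iff, Set.mem_Icc]
  omega

instance waterOrd_asymm (p : Pt) : Std.Asymm (waterOrd p) where
  asymm a b := by
    unfold waterOrd
    split_ifs <;> omega

theorem hmem_waterOrd_iff {p q : Pt} (hpq : Quad1 p q) (hq : 0 ≤ q.2) (a : ℤ) :
    Hmem (waterOrd p) p q a ↔ a ∈ Finset.Ico (p.1 + max p.2 0) (q.1 + max p.2 0) := by
  obtain ⟨hx, hy⟩ := hpq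
  have hcard : q.1 - p.1 = ((Finset.Ico (p.1 + max p.2 0) (q.1 + max p.2 0)).card : ℤ) := by
    rw [Int.card_Ico]
    omega
  rw [Hmem, hcard]
  refine amongSmallest_card_iff_mem (fun b hb => ?_) (fun b hb c hc hcH => ?_) a
  · simp only [Ival, Finset.mem_Ico, Finset.mem_Icc] at hb ⊢
    omega
  · simp only [Ival, Finset.mem_Ico, Finset.mem_Icc] at hb hc hcH
    unfold waterOrd
    split_ifs <;> omega

theorem seg_waterOrd_eq_stepPath {p q : Pt} (hpq : Quad1 p q) (hq : 0 ≤ q.2) :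
    seg (waterOrd p) p q = stepPath p q (max p.2 0) :=
  seg_eq_stepPath hpq.1 (le_max_left _ _) (max_le hpq.2 hq) (hmem_waterOrd_iff hpq hq)

/-- the waterline segments `S = R(≺_{(0,0)},(0,0),(4,3))` and
`S' = R(≺_{(3,-3)},(3,-3),(6,3))` contain the listed points (so the antidiagonal distance
takes the values `-3`, `0`, `-2` at coordinate sums `0`, `3`, `7`) and are not smooth;
hence the waterline CDS is not a smooth grid geometry. -/
theorem statement15 :
    (((0, 0) : Pt) ∈ seg (waterOrd ((0, 0) : Pt)) ((0, 0) : Pt) ((4, 3) : Pt)) ∧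
    (((3, 0) : Pt) ∈ seg (waterOrd ((0, 0) : Pt)) ((0, 0) : Pt) ((4, 3) : Pt)) ∧
    (((4, 3) : Pt) ∈ seg (waterOrd ((0, 0) : Pt)) ((0, 0) : Pt) ((4, 3) : Pt)) ∧
    (((3, -3) : Pt) ∈ seg (waterOrd ((3, -3) : Pt)) ((3, -3) : Pt) ((6, 3) : Pt)) ∧
    (((3, 0) : Pt) ∈ seg (waterOrd ((3, -3) : Pt)) ((3, -3) : Pt) ((6, 3) : Pt)) ∧
    (((6, 1) : Pt) ∈ seg (waterOrd ((3, -3) : Pt)) ((3, -3) : Pt) ((6, 3) : Pt)) ∧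
    ¬ SmoothPair (seg (waterOrd ((0, 0) : Pt)) ((0, 0) : Pt) ((4, 3) : Pt))
        (seg (waterOrd ((3, -3) : Pt)) ((3, -3) : Pt) ((6, 3) : Pt)) := by
  rw [seg_waterOrd_eq_stepPath (by simp [Quad1]) (by simp),
    seg_waterOrd_eq_stepPath (by simp [Quad1]) (by simp)]
  set S := stepPath (0, 0) (4, 3) (max 0 0) with hS
  set S' := stepPath (3, -3) (6, 3) (max (-3) 0) with hS'
  have start_mem : ((0, 0) : Pt) ∈ S := by simp [hS, stepPath]
  have meet_mem : ((3, 0) : Pt) ∈ S := by simp [hS, stepPath]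
  have end_mem : ((4, 3) : Pt) ∈ S := by simp [hS, stepPath]
  have start_mem' : ((3, -3) : Pt) ∈ S' := by simp [hS', stepPath]
  have meet_mem' : ((3, 0) : Pt) ∈ S' := by simp [hS', stepPath]
  have end_mem' : ((6, 1) : Pt) ∈ S' := by simp [hS', stepPath]
  refine ⟨start_mem, meet_mem, end_mem, start_mem', meet_mem', end_mem', ?_⟩
  rintro (hmono | hanti)
  · have : (0 : ℤ) ≤ -2 := hmono _ _ _ _ meet_mem meet_mem' end_mem end_mem'
      (by norm_num) (by norm_num) (by norm_num)
    omega
  · have : (0 : ℤ) ≤ -3 := hanti _ _ _ _ start_mem start_mem' meet_mem meet_mem'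
      (by norm_num) (by norm_num) (by norm_num)
    omega
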